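/- Let X = {0,1}² ⊆ ℤ² with c1-adjacency (a digital cycle of 4 points). Then every c1-continuous self-map f : X → X has cubical Lefschetz number L̄(f) = 1. -/

import Mathlib

/-- `c1`-adjacency on `ℤ^n`: `x, y` are `c1`-adjacent iff `∑ i, |x i − y i| = 1`. -/
def c1Adj {n : ℕ} (x y : Fin n → ℤ) : Prop := (∑ i, |x i - y i|) = 1

/-- `f` is `c1`-continuous on the digital image `X ⊆ ℤ^n`: `c1`-adjacent points of `X` have
equal or `c1`-adjacent images. -/
def c1Cont {n m : ℕ} (X : Finset (Fin n → ℤ)) (f : (Fin n → ℤ) → (Fin m → ℤ)) : Prop :=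
  ∀ x ∈ X, ∀ y ∈ X, c1Adj x y → f x = f y ∨ c1Adj (f x) (f y)

/-- `f` maps the digital image `X` into the digital image `Y`. -/
def MapsInto {n m : ℕ} (X : Finset (Fin n → ℤ)) (Y : Finset (Fin m → ℤ))
    (f : (Fin n → ℤ) → (Fin m → ℤ)) : Prop :=
  ∀ x ∈ X, f x ∈ Y

/-- The elementary cube `σ = t_1 × ⋯ × t_n ⊆ ℤ^n` with minimal corner `a`, where
`t_i = {a i, a i + 1}` for `i ∈ D` (the nondegenerate directions, so `dim σ = D.card`)
and `t_i = {a i}` otherwise. -/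
def eCube {n : ℕ} (a : Fin n → ℤ) (D : Finset (Fin n)) : Finset (Fin n → ℤ) :=
  D.powerset.image (fun s i => a i + if i ∈ s then 1 else 0)

/-- A homotopy between continuous maps `f, g : X → Y` is `H : X × {0,…,k} → Y` with
`H(x,0) = f(x)`, `H(x,k) = g(x)`, sending consecutive stages of each point to equal or
adjacent points, and continuous at each stage; `f ≃ g` iff such an `H` exists. -/
def c1Homotopic {n m : ℕ} (X : Finset (Fin n → ℤ)) (Y : Finset (Fin m → ℤ))
    (f g : (Fin n → ℤ) → (Fin m → ℤ)) : Prop :=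
  ∃ (k : ℕ) (H : (Fin n → ℤ) → ℕ → (Fin m → ℤ)),
    (∀ x ∈ X, ∀ t ≤ k, H x t ∈ Y) ∧
    (∀ x ∈ X, H x 0 = f x) ∧ (∀ x ∈ X, H x k = g x) ∧
    (∀ x ∈ X, ∀ t, t + 1 ≤ k → (H x t = H x (t + 1) ∨ c1Adj (H x t) (H x (t + 1)))) ∧
    (∀ t ≤ k, ∀ x ∈ X, ∀ x' ∈ X, c1Adj x x' → (H x t = H x' t ∨ c1Adj (H x t) (H x' t)))

/-- `x` is a `k`-approximate fixed point of `f` on `X`: there is a `c1`-path in `X` from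
`x` to `f x` of length at most `k`. -/
def nApproxFix {n : ℕ} (X : Finset (Fin n → ℤ)) (f : (Fin n → ℤ) → (Fin n → ℤ))
    (k : ℕ) (x : Fin n → ℤ) : Prop :=
  ∃ (m : ℕ) (p : ℕ → (Fin n → ℤ)), m ≤ k ∧ p 0 = x ∧ p m = f x ∧
    (∀ t ≤ m, p t ∈ X) ∧
    (∀ t, t + 1 ≤ m → (p t = p (t + 1) ∨ c1Adj (p t) (p (t + 1))))

open Classical in
/-- `ε(f, σ)` for `σ = eCube a D` with `f(σ) = σ`: on the nondegenerate directions `D` of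
`σ`, `f` is given by an affine map `x ↦ b + Mx` with `M` a signed permutation matrix
(a permutation `π` of `D` together with signs `s : D → {±1}`), and
`ε(f,σ) = det M = sgn(π) ⬝ ∏ s`. (Junk value `0` if `f` is not of this form on `σ`.) -/
noncomputable def cubeSign {n : ℕ} (f : (Fin n → ℤ) → (Fin n → ℤ))
    (a : Fin n → ℤ) (D : Finset (Fin n)) : ℤ :=
  if h : ∃ p : Equiv.Perm {i // i ∈ D} × ({i // i ∈ D} → ℤ),
      (∀ i, p.2 i = 1 ∨ p.2 i = -1) ∧
      ∀ x ∈ eCube a D, ∀ i : {i // i ∈ D},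
        f x (i : Fin n) = f a (i : Fin n) + p.2 i * (x ((p.1 i : Fin n)) - a ((p.1 i : Fin n)))
  then ((Equiv.Perm.sign h.choose.1 : ℤˣ) : ℤ) * ∏ i, h.choose.2 i
  else 0

open Classical in
/-- The cubical Lefschetz number `L̄(f) = ∑_σ (−1)^{dim σ} ε(f,σ)`, summing over all
elementary cubes `σ ⊆ X` with `f(σ) = σ`. -/
noncomputable def cubLef {n : ℕ} (X : Finset (Fin n → ℤ))
    (f : (Fin n → ℤ) → (Fin n → ℤ)) : ℤ :=
  ∑ a ∈ X, ∑ D : Finset (Fin n),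
    if eCube a D ⊆ X ∧ (eCube a D).image f = eCube a D then
      (-1 : ℤ) ^ D.card * cubeSign f a D
    else 0

open Classical in
/-- The cubical Euler characteristic `χ̄(X) = ∑_q (−1)^q k_q`, with `k_q` the number of
elementary cubes of dimension `q` contained in `X`. -/
noncomputable def cubEuler {n : ℕ} (X : Finset (Fin n → ℤ)) : ℤ :=
  ∑ a ∈ X, ∑ D : Finset (Fin n),
    if eCube a D ⊆ X then (-1 : ℤ) ^ D.card else 0

/-!
On `{0,1}²` the value of `f = (p, q)` at each corner lies in `{0,1}²`, so the contributions of the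
vertices and edges to `L̄(f)` are polynomials in the values of `p` and `q` at the corners. The
contribution of the 2-cube is the area `∮ p dq` enclosed by the image of its boundary: if `f` is
bijective, both numbers are the determinant of the linear part of `f`; otherwise two corners have
the same image and the image of the boundary encloses no area. The resulting polynomial expression
for `L̄(f)` simplifies to `1 − (Δp Δq)(bottom edge) − (Δp Δq)(left edge)`, and continuity of `f`
says that `Δp Δq = 0` on every edge.
-/

/-- The contribution `(−1)^{dim σ} ε(f, σ)` of the elementary cube `σ = eCube a D` to the cubical
Lefschetz number, taken to be `0` when `f(σ) ≠ σ`. -/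
noncomputable def cubeIndex {n : ℕ} (f : (Fin n → ℤ) → (Fin n → ℤ)) (a : Fin n → ℤ)
    (D : Finset (Fin n)) : ℤ :=
  if (eCube a D).image f = eCube a D then (-1 : ℤ) ^ D.card * cubeSign f a D else 0

/-- On `eCube a D`, the coordinates of `f` in the directions `D` are `x ↦ b + Mx`, where `M` is the
signed permutation matrix with entry `s i` in row `i` and column `π i`. -/
def IsSignedPermOn {n : ℕ} (f : (Fin n → ℤ) → (Fin n → ℤ)) (a : Fin n → ℤ) (D : Finset (Fin n))
    (π : Equiv.Perm {i // i ∈ D}) (s : {i // i ∈ D} → ℤ) : Prop :=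
  (∀ i, s i = 1 ∨ s i = -1) ∧ ∀ x ∈ eCube a D, ∀ i : {i // i ∈ D},
    f x i = f a i + s i * (x (π i) - a (π i))

/-- The area `∮ x dy` enclosed by the closed polygon `u v w z` in `ℤ²`. The formula is only
meant for polygons whose sides are parallel to the axes, where the choice of the endpoint at which
`x` is evaluated does not matter. -/
def loopArea (u v w z : Fin 2 → ℤ) : ℤ :=
  u 0 * (v 1 - u 1) + v 0 * (w 1 - v 1) + w 0 * (z 1 - w 1) + z 0 * (u 1 - z 1)

/-- The pair `u`, `v` of points of `ℤ^n` differs in at most one coordinate. -/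
def AxisParallel {n : ℕ} (u v : Fin n → ℤ) : Prop :=
  ∀ i j, i ≠ j → u i = v i ∨ u j = v j

section Cubes

variable {n : ℕ} {f : (Fin n → ℤ) → (Fin n → ℤ)} {a b x : Fin n → ℤ} {D E : Finset (Fin n)}
  {i : Fin n}

theorem mem_eCube : x ∈ eCube a D ↔ ∀ i, x i = a i ∨ i ∈ D ∧ x i = a i + 1 := by
  simp only [eCube, Finset.mem_image, Finset.mem_powerset]
  constructor
  · rintro ⟨s, hs, rfl⟩ i
    by_cases hi : i ∈ s
    · simp [hi, hs hi]
    · simp [hi]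
  · intro h
    refine ⟨D.filter fun i => x i = a i + 1, Finset.filter_subset _ _, funext fun i => ?_⟩
    have := h i
    grind

theorem add_single_mem_eCube (hi : i ∈ D) : a + Pi.single i 1 ∈ eCube a D := by
  refine mem_eCube.2 fun j => ?_
  obtain rfl | hj := eq_or_ne j i
  · simp [hi]
  · simp [hj]

theorem eCube_empty : eCube a ∅ = {a} := by
  simp [eCube]

theorem eCube_singleton : eCube a {i} = {a, a + Pi.single i 1} := by
  ext x
  simp only [mem_eCube, Finset.mem_singleton, Finset.mem_insert, funext_iff, Pi.add_apply,
    Pi.single_apply]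
  grind

theorem eCube_subset_eCube_iff (hb : b ∈ eCube a E) :
    eCube b D ⊆ eCube a E ↔ D ⊆ E.filter fun i => b i = a i := by
  constructor
  · intro h i hi
    have hbi := mem_eCube.1 hb i
    have htop := mem_eCube.1 (h (add_single_mem_eCube hi)) i
    simp only [Pi.add_apply, Pi.single_eq_same] at htop
    grind
  · intro h x hx
    refine mem_eCube.2 fun i => ?_
    have hbi := mem_eCube.1 hb i
    have hxi := mem_eCube.1 hx i
    grind

theorem cubLef_eCube :
    cubLef (eCube a E) f =
      ∑ b ∈ eCube a E, ∑ D ∈ (E.filter fun i => b i = a i).powerset, cubeIndex f b D := by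
  refine Finset.sum_congr rfl fun b hb => ?_
  simp only [eCube_subset_eCube_iff hb, ite_and, ← Finset.mem_powerset]
  rw [Finset.sum_ite_mem, Finset.univ_inter]
  simp only [cubeIndex]

theorem IsSignedPermOn.unique {π π' : Equiv.Perm {i // i ∈ D}} {s s' : {i // i ∈ D} → ℤ}
    (h : IsSignedPermOn f a D π s) (h' : IsSignedPermOn f a D π' s') : π = π' ∧ s = s' := by
  have key (i) : π i = π' i ∧ s i = s' i := by
    have e := h.2 _ (add_single_mem_eCube (π i).2) i
    have e' := h'.2 _ (add_single_mem_eCube (π i).2) i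
    have hsi := h.1 i
    simp only [Pi.add_apply, Pi.single_apply, Subtype.coe_inj] at e e'
    by_cases hπ : π' i = π i
    · simp only [hπ, if_true] at e e'
      exact ⟨hπ.symm, by omega⟩
    · simp only [hπ, if_true, if_false] at e e'
      omega
  exact ⟨Equiv.ext fun i => (key i).1, funext fun i => (key i).2⟩

theorem IsSignedPermOn.cubeSign_eq {π : Equiv.Perm {i // i ∈ D}} {s : {i // i ∈ D} → ℤ}
    (h : IsSignedPermOn f a D π s) : cubeSign f a D = Equiv.Perm.sign π * ∏ i, s i := by
  have hex : ∃ p : Equiv.Perm {i // i ∈ D} × ({i // i ∈ D} → ℤ), IsSignedPermOn f a D p.1 p.2 :=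
    ⟨(π, s), h⟩
  obtain ⟨hπ, hs⟩ := h.unique hex.choose_spec
  rw [hπ, hs]
  exact dif_pos hex

theorem cubeSign_univ {π : Equiv.Perm (Fin n)} {s : Fin n → ℤ} (hs : ∀ i, s i = 1 ∨ s i = -1)
    (h : ∀ x ∈ eCube a Finset.univ, ∀ i, f x i = f a i + s i * (x (π i) - a (π i))) :
    cubeSign f a Finset.univ = Equiv.Perm.sign π * ∏ i, s i := by
  have hf : IsSignedPermOn f a Finset.univ
      ((Equiv.subtypeUnivEquiv Finset.mem_univ).symm.permCongr π) fun i => s i :=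
    ⟨fun i => hs i, fun x hx i => h x hx i⟩
  rw [hf.cubeSign_eq, Equiv.Perm.sign_permCongr, Finset.prod_coe_sort]

theorem cubeSign_empty : cubeSign f a ∅ = 1 := by
  have h : IsSignedPermOn f a ∅ 1 fun _ => 1 := ⟨fun _ => Or.inl rfl, fun _ _ i => by grind⟩
  simp [h.cubeSign_eq]

theorem cubeSign_singleton
    (h : f (a + Pi.single i 1) i - f a i = 1 ∨ f (a + Pi.single i 1) i - f a i = -1) :
    cubeSign f a {i} = f (a + Pi.single i 1) i - f a i := by
  have hf : IsSignedPermOn f a {i} 1 fun _ => f (a + Pi.single i 1) i - f a i := by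
    refine ⟨fun _ => h, fun x hx j => ?_⟩
    obtain ⟨j, hj⟩ := j
    obtain rfl := Finset.mem_singleton.1 hj
    rw [eCube_singleton, Finset.mem_insert, Finset.mem_singleton] at hx
    rcases hx with rfl | rfl <;> simp
  simp [hf.cubeSign_eq]

theorem cubeIndex_empty : cubeIndex f a ∅ = ∏ j, if f a j = a j then 1 else 0 := by
  simp [cubeIndex, eCube_empty, cubeSign_empty, Finset.prod_ite_zero, funext_iff]

theorem axisParallel_of_eq_or_c1Adj {u v : Fin n → ℤ} (h : u = v ∨ c1Adj u v) :
    AxisParallel u v := by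
  rintro i j hij
  rcases h with rfl | h
  · exact Or.inl rfl
  · by_contra! hne
    have hi : 0 < |u i - v i| := abs_pos.2 (sub_ne_zero.2 hne.1)
    have hj : 0 < |u j - v j| := abs_pos.2 (sub_ne_zero.2 hne.2)
    have hle : |u i - v i| + |u j - v j| ≤ ∑ k, |u k - v k| :=
      Finset.add_le_sum (fun k _ => abs_nonneg (u k - v k)) (Finset.mem_univ i)
        (Finset.mem_univ j) hij
    rw [c1Adj] at h
    omega

theorem c1Adj_add_single (a : Fin n → ℤ) (i : Fin n) : c1Adj a (a + Pi.single i 1) := by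
  simp [c1Adj, Pi.single_apply, apply_ite abs]

theorem c1Cont.axisParallel {m : ℕ} {X : Finset (Fin n → ℤ)} {g : (Fin n → ℤ) → (Fin m → ℤ)}
    (hg : c1Cont X g) (ha : a ∈ X) (hb : b ∈ X) (hab : c1Adj a b) : AxisParallel (g a) (g b) :=
  axisParallel_of_eq_or_c1Adj (hg a ha b hb hab)

theorem image_eCube_singleton_eq_iff (h : AxisParallel (f a) (f (a + Pi.single i 1)))
    (ha : f a i = a i ∨ f a i = a i + 1)
    (hb : f (a + Pi.single i 1) i = a i ∨ f (a + Pi.single i 1) i = a i + 1) :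
    (eCube a {i}).image f = eCube a {i} ↔
      f a i ≠ f (a + Pi.single i 1) i ∧ ∀ j ≠ i, f a j = a j := by
  rw [eCube_singleton, Finset.image_insert, Finset.image_singleton]
  set b := a + Pi.single i 1 with b_def
  have hbi : b i = a i + 1 := by simp [b_def]
  have hbj (j) (hj : j ≠ i) : b j = a j := by simp [b_def, hj]
  rw [← Finset.coe_inj, Finset.coe_pair, Finset.coe_pair, Set.pair_eq_pair_iff]
  constructor
  · rintro (⟨ha', hb'⟩ | ⟨ha', hb'⟩)
    · exact ⟨by rw [ha', hb', hbi]; omega, fun j _ => by rw [ha']⟩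
    · exact ⟨by rw [ha', hb', hbi]; omega, fun j hj => by rw [ha', hbj j hj]⟩
  · rintro ⟨hne, hfa⟩
    have hfb (j) (hj : j ≠ i) : f b j = b j := by
      rw [hbj j hj, ← hfa j hj]
      exact ((h i j hj.symm).resolve_left hne).symm
    refine Or.imp (fun hai => ⟨funext fun j => ?_, funext fun j => ?_⟩)
      (fun hai => ⟨funext fun j => ?_, funext fun j => ?_⟩) ha <;> grind

theorem cubeIndex_singleton (h : AxisParallel (f a) (f (a + Pi.single i 1)))
    (ha : f a i = a i ∨ f a i = a i + 1)
    (hb : f (a + Pi.single i 1) i = a i ∨ f (a + Pi.single i 1) i = a i + 1) :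
    cubeIndex f a {i} =
      (f a i - f (a + Pi.single i 1) i) * ∏ j ∈ {i}ᶜ, if f a j = a j then 1 else 0 := by
  have hsign := cubeSign_singleton (f := f) (a := a) (i := i)
  simp only [cubeIndex, image_eCube_singleton_eq_iff h ha hb, Finset.prod_ite_zero,
    Finset.mem_compl, Finset.mem_singleton, Finset.card_singleton, Finset.prod_const_one]
  grind

end Cubes

theorem perm_fin_two_eq_one_or_swap (π : Equiv.Perm (Fin 2)) : π = 1 ∨ π = Equiv.swap 0 1 := by
  revert π
  decide

section LoopArea

variable {u v w z : Fin 2 → ℤ}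

theorem AxisParallel.sub_mul_sub_eq_zero (h : AxisParallel u v) :
    (u 0 - v 0) * (u 1 - v 1) = 0 := by
  simpa [sub_eq_zero] using h 0 1 zero_ne_one

theorem loopArea_rotate (u v w z : Fin 2 → ℤ) : loopArea u v w z = loopArea v w z u := by
  simp only [loopArea]
  ring

theorem loopArea_eq_zero_of_adjacent_eq (huw : AxisParallel u w) (hwz : AxisParallel w z)
    (hzu : AxisParallel z u) : loopArea u u w z = 0 := by
  simp only [loopArea]
  rcases huw 0 1 zero_ne_one with h | h
  · linear_combination -hzu.sub_mul_sub_eq_zero - (z 1 - w 1) * h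
  · linear_combination -hwz.sub_mul_sub_eq_zero + (z 0 - u 0) * h

theorem loopArea_eq_zero_of_opposite_eq (huv : AxisParallel u v) (hzu : AxisParallel z u) :
    loopArea u v u z = 0 := by
  simp only [loopArea]
  linear_combination -huv.sub_mul_sub_eq_zero - hzu.sub_mul_sub_eq_zero

theorem loopArea_eq_zero_of_not_nodup (huv : AxisParallel u v) (hvw : AxisParallel v w)
    (hwz : AxisParallel w z) (hzu : AxisParallel z u) (h : ¬ [u, v, w, z].Nodup) :
    loopArea u v w z = 0 := by
  have h : u = v ∨ u = w ∨ u = z ∨ v = w ∨ v = z ∨ w = z := by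
    contrapose! h
    simp [h]
  rcases h with rfl | rfl | rfl | rfl | rfl | rfl
  · exact loopArea_eq_zero_of_adjacent_eq hvw hwz hzu
  · exact loopArea_eq_zero_of_opposite_eq huv hzu
  · rw [← loopArea_rotate]
    exact loopArea_eq_zero_of_adjacent_eq huv hvw hwz
  · rw [loopArea_rotate]
    exact loopArea_eq_zero_of_adjacent_eq hwz hzu huv
  · rw [loopArea_rotate]
    exact loopArea_eq_zero_of_opposite_eq hvw huv
  · rw [loopArea_rotate, loopArea_rotate]
    exact loopArea_eq_zero_of_adjacent_eq hzu huv hvw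

theorem loopArea_eq_of_signedPerm {π : Equiv.Perm (Fin 2)} {s : Fin 2 → ℤ}
    (h : ∀ i, v i = u i + s i * ![1, 0] (π i) ∧ z i = u i + s i * ![0, 1] (π i) ∧
      w i = u i + s i) :
    loopArea u v w z = Equiv.Perm.sign π * ∏ i, s i := by
  simp only [loopArea, Fin.prod_univ_two, h]
  rcases perm_fin_two_eq_one_or_swap π with rfl | rfl
  · simp only [Equiv.Perm.one_apply, Matrix.cons_val_zero, Matrix.cons_val_one, Equiv.Perm.sign_one,
      Units.val_one]
    ring
  · simp only [Equiv.swap_apply_left, Equiv.swap_apply_right, Matrix.cons_val_zero,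
      Matrix.cons_val_one, Equiv.Perm.sign_swap zero_ne_one, Units.val_neg, Units.val_one]
    ring

end LoopArea

/-- The four-point image `{0,1}²`. -/
abbrev unitSquare : Finset (Fin 2 → ℤ) := eCube ![0, 0] Finset.univ

theorem unitSquare_eq : unitSquare = {![0, 0], ![1, 0], ![0, 1], ![1, 1]} := by
  decide

theorem mem_unitSquare {x : Fin 2 → ℤ} : x ∈ unitSquare ↔ ∀ i, x i = 0 ∨ x i = 1 := by
  simp [mem_eCube, Fin.forall_fin_two]

theorem compl_singleton_fin_two {i j : Fin 2} (h : j ≠ i) : ({i}ᶜ : Finset (Fin 2)) = {j} := by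
  revert i j
  decide

theorem ite_eq_of_zero_or_one {x c : ℤ} (hx : x = 0 ∨ x = 1) (hc : c = 0 ∨ c = 1) :
    (if x = c then 1 else 0) = (1 - x) * (1 - c) + x * c := by
  rcases hx with rfl | rfl <;> rcases hc with rfl | rfl <;> simp

theorem cubLef_unitSquare (f : (Fin 2 → ℤ) → (Fin 2 → ℤ)) :
    cubLef unitSquare f =
      cubeIndex f ![0, 0] ∅ + cubeIndex f ![1, 0] ∅ + cubeIndex f ![0, 1] ∅ +
        cubeIndex f ![1, 1] ∅ +
      (cubeIndex f ![0, 0] {0} + cubeIndex f ![0, 0] {1} + cubeIndex f ![1, 0] {1} +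
        cubeIndex f ![0, 1] {0}) +
      cubeIndex f ![0, 0] Finset.univ := by
  have h00 : (Finset.univ.filter fun i : Fin 2 => (![0, 0] : Fin 2 → ℤ) i = ![0, 0] i).powerset =
      {∅, {0}, {1}, Finset.univ} := by decide
  have h10 : (Finset.univ.filter fun i : Fin 2 => (![1, 0] : Fin 2 → ℤ) i = ![0, 0] i).powerset =
      {∅, {1}} := by decide
  have h01 : (Finset.univ.filter fun i : Fin 2 => (![0, 1] : Fin 2 → ℤ) i = ![0, 0] i).powerset =
      {∅, {0}} := by decide
  have h11 : (Finset.univ.filter fun i : Fin 2 => (![1, 1] : Fin 2 → ℤ) i = ![0, 0] i).powerset =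
      {∅} := by decide
  rw [cubLef_eCube, show eCube ![0, 0] Finset.univ = _ from unitSquare_eq]
  repeat rw [Finset.sum_insert (by decide)]
  rw [Finset.sum_singleton, h00, h10, h01, h11]
  repeat rw [Finset.sum_insert (by decide)]
  simp only [Finset.sum_singleton]
  ring

theorem exists_signedPerm_of_nodup {u v w z : Fin 2 → ℤ} (hu : u ∈ unitSquare)
    (hv : v ∈ unitSquare) (hw : w ∈ unitSquare) (hz : z ∈ unitSquare) (huv : AxisParallel u v)
    (hzu : AxisParallel z u) (h : [u, v, w, z].Nodup) :
    ∃ (π : Equiv.Perm (Fin 2)) (s : Fin 2 → ℤ), (∀ i, s i = 1 ∨ s i = -1) ∧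
      ∀ i, v i = u i + s i * ![1, 0] (π i) ∧ z i = u i + s i * ![0, 1] (π i) ∧
        w i = u i + s i := by
  have hs (i) : 1 - 2 * u i = 1 ∨ 1 - 2 * u i = -1 := by
    have := mem_unitSquare.1 hu i
    omega
  simp only [mem_unitSquare, Fin.forall_fin_two] at hu hv hw hz
  simp only [List.nodup_cons, List.mem_cons, List.not_mem_nil, or_false, not_or, funext_iff,
    Fin.forall_fin_two] at h
  obtain ⟨⟨huv', huw', huz'⟩, ⟨hvw', hvz'⟩, hwz', -⟩ := h
  have hzu := hzu 0 1 zero_ne_one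
  rcases huv 0 1 zero_ne_one with huv | huv
  · have hv' : v 0 = u 0 ∧ v 1 = 1 - u 1 := by grind
    have hz' : z 0 = 1 - u 0 ∧ z 1 = u 1 := by grind
    have hw' : w 0 = 1 - u 0 ∧ w 1 = 1 - u 1 := by grind
    refine ⟨Equiv.swap 0 1, fun i => 1 - 2 * u i, hs, Fin.forall_fin_two.2 ?_⟩
    simp only [Equiv.swap_apply_left, Equiv.swap_apply_right, Matrix.cons_val_zero,
      Matrix.cons_val_one, hv', hw', hz']
    grind
  · have hv' : v 0 = 1 - u 0 ∧ v 1 = u 1 := by grind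
    have hz' : z 0 = u 0 ∧ z 1 = 1 - u 1 := by grind
    have hw' : w 0 = 1 - u 0 ∧ w 1 = 1 - u 1 := by grind
    refine ⟨1, fun i => 1 - 2 * u i, hs, Fin.forall_fin_two.2 ?_⟩
    simp only [Equiv.Perm.one_apply, Matrix.cons_val_zero, Matrix.cons_val_one, hv', hw', hz']
    grind

section SelfMap

variable {f : (Fin 2 → ℤ) → (Fin 2 → ℤ)} (hfX : MapsInto unitSquare unitSquare f)

include hfX

theorem MapsInto.cubeIndex_vertex {v : Fin 2 → ℤ} (hv : v ∈ unitSquare) :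
    cubeIndex f v ∅ = ∏ j, ((1 - f v j) * (1 - v j) + f v j * v j) := by
  rw [cubeIndex_empty]
  exact Finset.prod_congr rfl fun j _ =>
    ite_eq_of_zero_or_one (mem_unitSquare.1 (hfX v hv) j) (mem_unitSquare.1 hv j)

theorem MapsInto.cubeIndex_edge (hf : c1Cont unitSquare f) {a b : Fin 2 → ℤ} {i j : Fin 2}
    (ha : a ∈ unitSquare) (hb : b ∈ unitSquare) (hab : a + Pi.single i 1 = b) (hij : j ≠ i) :
    cubeIndex f a {i} = (f a i - f b i) * ((1 - f a j) * (1 - a j) + f a j * a j) := by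
  subst hab
  have hfa := mem_unitSquare.1 (hfX a ha)
  have hfb := mem_unitSquare.1 (hfX _ hb)
  have hai : a i = 0 := by
    have hai := mem_unitSquare.1 ha i
    have hbi := mem_unitSquare.1 hb i
    simp only [Pi.add_apply, Pi.single_eq_same] at hbi
    omega
  have hpar := hf.axisParallel ha hb (c1Adj_add_single a i)
  rw [cubeIndex_singleton hpar (by simpa [hai] using hfa i) (by simpa [hai] using hfb i),
    compl_singleton_fin_two hij, Finset.prod_singleton,
    ite_eq_of_zero_or_one (hfa j) (mem_unitSquare.1 ha j)]

theorem MapsInto.image_unitSquare_eq_iff_nodup :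
    unitSquare.image f = unitSquare ↔
      [f ![0, 0], f ![1, 0], f ![1, 1], f ![0, 1]].Nodup := by
  have hcorners : unitSquare = [![0, 0], ![1, 0], ![1, 1], ![0, 1]].toFinset := by decide
  have hsub : unitSquare.image f ⊆ unitSquare := Finset.image_subset_iff.2 hfX
  calc
    unitSquare.image f = unitSquare ↔ Set.InjOn f unitSquare := by
      rw [← Finset.card_image_iff]
      exact ⟨fun h => by rw [h], fun h => Finset.eq_of_subset_of_card_le hsub h.ge⟩
    _ ↔ (List.map f [![0, 0], ![1, 0], ![1, 1], ![0, 1]]).Nodup := by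
      rw [List.nodup_map_iff_inj_on (by decide), hcorners]
      simp only [Set.InjOn, List.coe_toFinset]
      rfl

theorem MapsInto.cubeIndex_unitSquare (hf : c1Cont unitSquare f) :
    cubeIndex f ![0, 0] Finset.univ =
      loopArea (f ![0, 0]) (f ![1, 0]) (f ![1, 1]) (f ![0, 1]) := by
  have h₁ : AxisParallel (f ![0, 0]) (f ![1, 0]) :=
    hf.axisParallel (by decide) (by decide) (by simp [c1Adj])
  have h₂ : AxisParallel (f ![1, 0]) (f ![1, 1]) :=
    hf.axisParallel (by decide) (by decide) (by simp [c1Adj])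
  have h₃ : AxisParallel (f ![1, 1]) (f ![0, 1]) :=
    hf.axisParallel (by decide) (by decide) (by simp [c1Adj])
  have h₄ : AxisParallel (f ![0, 1]) (f ![0, 0]) :=
    hf.axisParallel (by decide) (by decide) (by simp [c1Adj])
  simp only [cubeIndex, hfX.image_unitSquare_eq_iff_nodup]
  split_ifs with hnodup
  · obtain ⟨π, s, hs, h⟩ := exists_signedPerm_of_nodup (hfX _ (by decide)) (hfX _ (by decide))
      (hfX _ (by decide)) (hfX _ (by decide)) h₁ h₄ hnodup
    have hsign : cubeSign f ![0, 0] Finset.univ = Equiv.Perm.sign π * ∏ i, s i := by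
      refine cubeSign_univ hs ?_
      have hzero : (![0, 0] : Fin 2 → ℤ) = 0 := by decide
      rw [show eCube ![0, 0] Finset.univ = _ from unitSquare_eq]
      have hone (k : Fin 2) : (![1, 1] : Fin 2 → ℤ) k = 1 := by revert k; decide
      simp [h, hzero, hone]
    rw [hsign, loopArea_eq_of_signedPerm h, Finset.card_univ, Fintype.card_fin]
    ring
  · exact (loopArea_eq_zero_of_not_nodup h₁ h₂ h₃ h₄ hnodup).symm

end SelfMap

/-- Let `X = {0,1}² ⊆ ℤ²` with `c1`-adjacency (a digital cycle of 4 points). Then every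
`c1`-continuous self-map `f : X → X` has cubical Lefschetz number `L̄(f) = 1`. -/
theorem cubLef_square_eq_one
    (f : (Fin 2 → ℤ) → (Fin 2 → ℤ))
    (hfX : MapsInto (eCube (fun _ => (0 : ℤ)) (Finset.univ : Finset (Fin 2)))
      (eCube (fun _ => (0 : ℤ)) Finset.univ) f)
    (hf : c1Cont (eCube (fun _ => (0 : ℤ)) (Finset.univ : Finset (Fin 2))) f) :
    cubLef (eCube (fun _ => (0 : ℤ)) (Finset.univ : Finset (Fin 2))) f = 1 := by
  have horigin : (fun _ : Fin 2 => (0 : ℤ)) = ![0, 0] := by decide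
  rw [horigin] at hfX hf ⊢
  have hbottom : AxisParallel (f ![0, 0]) (f ![1, 0]) :=
    hf.axisParallel (by decide) (by decide) (by simp [c1Adj])
  have hleft : AxisParallel (f ![0, 0]) (f ![0, 1]) :=
    hf.axisParallel (by decide) (by decide) (by simp [c1Adj])
  rw [cubLef_unitSquare, hfX.cubeIndex_unitSquare hf,
    hfX.cubeIndex_vertex (v := ![0, 0]) (by decide),
    hfX.cubeIndex_vertex (v := ![1, 0]) (by decide),
    hfX.cubeIndex_vertex (v := ![0, 1]) (by decide),
    hfX.cubeIndex_vertex (v := ![1, 1]) (by decide),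
    hfX.cubeIndex_edge hf (b := ![1, 0]) (j := 1) (by decide) (by decide) (by decide) (by decide),
    hfX.cubeIndex_edge hf (b := ![0, 1]) (j := 0) (by decide) (by decide) (by decide) (by decide),
    hfX.cubeIndex_edge hf (b := ![1, 1]) (j := 0) (by decide) (by decide) (by decide) (by decide),
    hfX.cubeIndex_edge hf (b := ![1, 1]) (j := 1) (by decide) (by decide) (by decide) (by decide)]
  simp only [loopArea, Fin.prod_univ_two, Matrix.cons_val_zero, Matrix.cons_val_one]
  linear_combination -hbottom.sub_mul_sub_eq_zero - hleft.sub_mul_sub_eq_zero
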